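/- For any (u,φ), (v,ψ) ∈ Ũ(H), one has |ψ − φ|/N ≤ d̃((u,φ), (v,ψ)) ≤ |ψ − φ|/N + 2π. -/

import Mathlib

noncomputable section

abbrev Hsp (N : ℕ) : Type := EuclideanSpace ℂ (Fin N)

abbrev Op (N : ℕ) : Type := Hsp N →L[ℂ] Hsp N

/-- A map `γ : ℝ → E` is piecewise C¹ on `[a,b]` if there is a partition
`a = τ 0 ≤ τ 1 ≤ ⋯ ≤ τ n = b` such that `γ` is C¹ on each subinterval. -/
def PiecewiseC1On {E : Type*} [NormedAddCommGroup E] [NormedSpace ℝ E]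
    (γ : ℝ → E) (a b : ℝ) : Prop :=
  ∃ (n : ℕ) (τ : ℕ → ℝ), τ 0 = a ∧ τ n = b ∧ (∀ i < n, τ i ≤ τ (i + 1)) ∧
    ∀ i < n, ContDiffOn ℝ 1 γ (Set.Icc (τ i) (τ (i + 1)))

/-- The length `L(γ) = ∫_a^b ‖γ'(t)‖ dt` of a curve. -/
def pathLength {E : Type*} [NormedAddCommGroup E] [NormedSpace ℝ E]
    (γ : ℝ → E) (a b : ℝ) : ℝ :=
  ∫ t in a..b, ‖deriv γ t‖

/-- Geodesic distance on the unitary group of `EuclideanSpace ℂ (Fin N)`, for the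
Finsler metric given by the operator norm: the infimum of lengths of piecewise C¹
curves in the unitary group joining `u` to `v`. -/
def geoDist (N : ℕ) (u v : Op N) : ℝ :=
  sInf {l | ∃ (a b : ℝ) (γ : ℝ → Op N), a ≤ b ∧ PiecewiseC1On γ a b ∧
    (∀ t ∈ Set.Icc a b, γ t ∈ unitary (Op N)) ∧ γ a = u ∧ γ b = v ∧
    l = pathLength γ a b}

/-- `(u, φ)` belongs to the realization `Ũ(H) = {(u,φ) : det u = e^{iφ}}` of the
universal cover of the unitary group. -/
def InUCover (N : ℕ) (u : Op N) (φ : ℝ) : Prop :=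
  u ∈ unitary (Op N) ∧
    LinearMap.det (u : Hsp N →ₗ[ℂ] Hsp N) = Complex.exp (φ * Complex.I)

/-- Geodesic distance on the universal cover `Ũ(H)`: the infimum of the lengths
`∫ ‖γ'(t)‖ dt` over piecewise C¹ curves `t ↦ (γ t, f t)` in `Ũ(H)` joining
`(u, φ)` to `(v, ψ)`. -/
def ucoverDist (N : ℕ) (u : Op N) (φ : ℝ) (v : Op N) (ψ : ℝ) : ℝ :=
  sInf {l | ∃ (a b : ℝ) (γ : ℝ → Op N) (f : ℝ → ℝ), a ≤ b ∧
    PiecewiseC1On (fun t => (γ t, f t)) a b ∧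
    (∀ t ∈ Set.Icc a b, InUCover N (γ t) (f t)) ∧
    γ a = u ∧ f a = φ ∧ γ b = v ∧ f b = ψ ∧
    l = pathLength γ a b}

/-- The multiset of eigenvalues (with multiplicity) of an endomorphism, i.e. the
roots of its characteristic polynomial. -/
def eigenvalueMultiset (N : ℕ) (w : Op N) : Multiset ℂ :=
  (LinearMap.charpoly (w : Hsp N →ₗ[ℂ] Hsp N)).roots

/-- `θ ∈ R`: `(e^{iθ_j})_j` is the family of eigenvalues of `w` (with multiplicity)
and `∑ θ_j = c`. -/
def InRSet (N : ℕ) (w : Op N) (c : ℝ) (θ : Fin N → ℝ) : Prop :=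
  Multiset.map (fun j => Complex.exp ((θ j : ℂ) * Complex.I)) Finset.univ.val
      = eigenvalueMultiset N w ∧ ∑ j, θ j = c

/-- `m = min { max_j |θ_j| : θ ∈ R }`. -/
def mval (N : ℕ) (w : Op N) (c : ℝ) : ℝ :=
  sInf {x | ∃ θ : Fin N → ℝ, InRSet N w c θ ∧ x = ⨆ j, |θ j|}

end

/-!
The tangent vector of a curve `(γ, f)` in `Ũ(H)` satisfies `|f'| ≤ N ‖γ'‖`, because the determinant
is `N`-Lipschitz on the unitary group and `det γ = e^{if}`; integrating gives the lower bound.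

For the upper bound, diagonalise `u⁻¹v` in an orthonormal basis. Its eigenvalues are `e^{iθ_j}` with
all `θ_j` in `[m, m + 2π)`, where `m = (ψ - φ) / N`. Then `∑ θ_j - (ψ - φ)` is one of
`0, 2π, …, 2πN`, so subtracting `2π` from some of the `θ_j` makes the sum equal to `ψ - φ`, while
`|θ_j - m| ≤ 2π` still holds. The curve `t ↦ u exp(itΘ)`, `Θ` having eigenvalues `θ_j`, lifts to
`Ũ(H)`, joins the two points and has constant speed `max_j |θ_j| ≤ |m| + 2π`.
-/

open Complex hiding exp
open MeasureTheory Module Set Topology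
open NormedSpace (exp)

/-! ### Piecewise C¹ curves -/

section Curves

variable {E F : Type*} [NormedAddCommGroup E] [NormedSpace ℝ E]
  [NormedAddCommGroup F] [NormedSpace ℝ F] {γ : ℝ → E} {g : ℝ → F} {a b : ℝ}

theorem pathLength_nonneg (γ : ℝ → E) (hab : a ≤ b) : 0 ≤ pathLength γ a b :=
  intervalIntegral.integral_nonneg hab fun _ _ => norm_nonneg _

theorem pathLength_add {c : ℝ} (h₁ : IntervalIntegrable (deriv γ) volume a b)
    (h₂ : IntervalIntegrable (deriv γ) volume b c) :
    pathLength γ a b + pathLength γ b c = pathLength γ a c :=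
  intervalIntegral.integral_add_adjacent_intervals h₁.norm h₂.norm

theorem differentiableAt_of_contDiffOn_Icc (hγ : ContDiffOn ℝ 1 γ (Icc a b)) {x : ℝ}
    (hx : x ∈ Ioo a b) : DifferentiableAt ℝ γ x :=
  (hγ.differentiableOn one_ne_zero).differentiableAt (Icc_mem_nhds hx.1 hx.2)

theorem intervalIntegrable_deriv_of_contDiffOn_Icc (hγ : ContDiffOn ℝ 1 γ (Icc a b))
    (hab : a ≤ b) : IntervalIntegrable (deriv γ) volume a b := by
  rcases hab.eq_or_lt with rfl | hlt
  · exact .refl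
  have hcont : ContinuousOn (derivWithin γ (Icc a b)) (Icc a b) :=
    hγ.continuousOn_derivWithin (uniqueDiffOn_Icc hlt) le_rfl
  refine (hcont.intervalIntegrable_of_Icc hab).congr_uIoo fun x hx => ?_
  rw [uIoo_of_le hab] at hx
  exact derivWithin_of_mem_nhds (Icc_mem_nhds hx.1 hx.2)

theorem norm_sub_le_pathLength_of_contDiffOn_Icc [CompleteSpace E]
    (hγ : ContDiffOn ℝ 1 γ (Icc a b)) (hab : a ≤ b) : ‖γ b - γ a‖ ≤ pathLength γ a b := by
  rw [← intervalIntegral.integral_deriv_of_contDiffOn_Icc hγ hab]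
  exact intervalIntegral.norm_integral_le_integral_norm hab

theorem norm_deriv_le_of_norm_sub_le {x K : ℝ} (hg : DifferentiableAt ℝ g x)
    (hγ : DifferentiableAt ℝ γ x) (h : ∀ᶠ y in 𝓝 x, ‖g y - g x‖ ≤ K * ‖γ y - γ x‖) :
    ‖deriv g x‖ ≤ K * ‖deriv γ x‖ := by
  refine le_of_tendsto_of_tendsto hg.hasDerivAt.tendsto_slope.norm
    (hγ.hasDerivAt.tendsto_slope.norm.const_mul K) ?_
  filter_upwards [nhdsWithin_le_nhds h] with y hy
  rw [slope_def_module, slope_def_module, norm_smul, norm_smul, mul_left_comm]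
  gcongr

namespace PiecewiseC1On

theorem induction_on {P : ℝ → ℝ → Prop} (hγ : PiecewiseC1On γ a b) (refl : ∀ x, P x x)
    (append : ∀ x y z, PiecewiseC1On γ x y → y ≤ z → ContDiffOn ℝ 1 γ (Icc y z) → P x y → P x z) :
    P a b := by
  obtain ⟨n, τ, rfl, rfl, hmono, hsmooth⟩ := hγ
  induction n with
  | zero => exact refl _
  | succ n ih =>
    have hmono' : ∀ i < n, τ i ≤ τ (i + 1) := fun i hi => hmono i (by lia)
    have hsmooth' : ∀ i < n, ContDiffOn ℝ 1 γ (Icc (τ i) (τ (i + 1))) :=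
      fun i hi => hsmooth i (by lia)
    exact append _ _ _ ⟨n, τ, rfl, rfl, hmono', hsmooth'⟩ (hmono n n.lt_succ_self)
      (hsmooth n n.lt_succ_self) (ih hmono' hsmooth')

theorem of_contDiff (hγ : ContDiff ℝ 1 γ) (hab : a ≤ b) : PiecewiseC1On γ a b :=
  ⟨1, fun i => if i = 0 then a else b, by simp, by simp, by simpa, fun _ _ => hγ.contDiffOn⟩

theorem comp_clm (L : E →L[ℝ] F) (hγ : PiecewiseC1On γ a b) :
    PiecewiseC1On (fun t => L (γ t)) a b :=
  let ⟨n, τ, hτ₀, hτn, hmono, hsmooth⟩ := hγ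
  ⟨n, τ, hτ₀, hτn, hmono, fun i hi => L.contDiff.comp_contDiffOn (hsmooth i hi)⟩

theorem intervalIntegrable_deriv (hγ : PiecewiseC1On γ a b) :
    IntervalIntegrable (deriv γ) volume a b :=
  hγ.induction_on (P := IntervalIntegrable (deriv γ) volume) (fun _ => .refl)
    fun _ _ _ _ hyz hsmooth ih =>
      ih.trans (intervalIntegrable_deriv_of_contDiffOn_Icc hsmooth hyz)

theorem finite_not_differentiableAt (hγ : PiecewiseC1On γ a b) :
    {x ∈ Icc a b | ¬DifferentiableAt ℝ γ x}.Finite := by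
  refine hγ.induction_on (P := fun a b => {x ∈ Icc a b | ¬DifferentiableAt ℝ γ x}.Finite)
    (fun x => (finite_singleton x).subset fun y hy => by simpa using hy.1)
    fun x y z _ _ hsmooth ih => (ih.union (finite_singleton z)).subset ?_
  rintro w ⟨hw, hndiff⟩
  rcases le_or_gt w y with hwy | hyw
  · exact .inl ⟨⟨hw.1, hwy⟩, hndiff⟩
  rcases hw.2.eq_or_lt with rfl | hwz
  · exact .inr rfl
  · exact absurd (differentiableAt_of_contDiffOn_Icc hsmooth ⟨hyw, hwz⟩) hndiff

theorem norm_sub_le_pathLength [CompleteSpace E] (hγ : PiecewiseC1On γ a b) :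
    ‖γ b - γ a‖ ≤ pathLength γ a b := by
  refine hγ.induction_on (P := fun a b => ‖γ b - γ a‖ ≤ pathLength γ a b)
    (fun x => by simp [pathLength]) fun x y z hxy hyz hsmooth ih => ?_
  calc ‖γ z - γ x‖ ≤ ‖γ z - γ y‖ + ‖γ y - γ x‖ := norm_sub_le_norm_sub_add_norm_sub ..
    _ ≤ pathLength γ y z + pathLength γ x y :=
      add_le_add (norm_sub_le_pathLength_of_contDiffOn_Icc hsmooth hyz) ih
    _ = pathLength γ x z := by
      rw [add_comm, pathLength_add hxy.intervalIntegrable_deriv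
        (intervalIntegrable_deriv_of_contDiffOn_Icc hsmooth hyz)]

theorem pathLength_le_mul {K : ℝ} (hγ : PiecewiseC1On γ a b) (hg : PiecewiseC1On g a b)
    (hab : a ≤ b)
    (hK : ∀ x ∈ Ioo a b, DifferentiableAt ℝ γ x → DifferentiableAt ℝ g x →
      ‖deriv g x‖ ≤ K * ‖deriv γ x‖) :
    pathLength g a b ≤ K * pathLength γ a b := by
  rw [pathLength, pathLength, ← intervalIntegral.integral_const_mul]
  refine intervalIntegral.integral_mono_ae_restrict hab hg.intervalIntegrable_deriv.norm
    (hγ.intervalIntegrable_deriv.norm.const_mul K) ?_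
  rw [Filter.EventuallyLE, ← restrict_Ioo_eq_restrict_Icc, ae_restrict_iff' measurableSet_Ioo]
  filter_upwards [hγ.finite_not_differentiableAt.countable.ae_notMem volume,
    hg.finite_not_differentiableAt.countable.ae_notMem volume] with x hxγ hxg hx
  simp only [not_and, not_not] at hxγ hxg
  exact hK x hx (hxγ (Ioo_subset_Icc_self hx)) (hxg (Ioo_subset_Icc_self hx))

end PiecewiseC1On

end Curves

/-! ### Diagonal operators -/

section Diagonal

variable {ι E : Type*} [Fintype ι] [NormedAddCommGroup E] [InnerProductSpace ℂ E] [CompleteSpace E]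

open scoped Classical in
/-- The operators on `E` that are diagonal in the orthonormal basis `b`, parametrised by their
diagonal entries. Bundling them as a star algebra homomorphism makes the formulas for norms,
unitarity and exponentials instances of general facts. -/
noncomputable def diagonalOperator (b : OrthonormalBasis ι ℂ E) :
    (ι → ℂ) →⋆ₐ[ℂ] (E →L[ℂ] E) :=
  let diagonal : (ι → ℂ) →⋆ₐ[ℂ] Matrix ι ι ℂ :=
    { Matrix.diagonalAlgHom ℂ with map_star' c := (Matrix.diagonal_conjTranspose c).symm }
  (Matrix.toEuclideanCLM.trans b.repr.symm.conjStarAlgEquiv).toStarAlgHom.comp diagonal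

variable (b : OrthonormalBasis ι ℂ E)

theorem diagonalOperator_apply_basis (c : ι → ℂ) (j : ι) :
    diagonalOperator b c (b j) = c j • b j := by
  classical
  change b.repr.symm (Matrix.toEuclideanCLM (𝕜 := ℂ) (Matrix.diagonal c) (b.repr (b j))) = _
  rw [LinearIsometryEquiv.symm_apply_eq]
  ext i
  rcases eq_or_ne i j with rfl | hij <;> simp [Matrix.mulVec_diagonal, *]

theorem eq_diagonalOperator_of_apply_basis {b : OrthonormalBasis ι ℂ E} {A : E →L[ℂ] E}
    {c : ι → ℂ} (h : ∀ j, A (b j) = c j • b j) : A = diagonalOperator b c :=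
  ContinuousLinearMap.coe_injective <| b.toBasis.ext fun j => by
    simp [h, diagonalOperator_apply_basis]

theorem diagonalOperator_injective : Function.Injective (diagonalOperator b) := by
  intro c d hcd
  ext j
  have hj : c j • b j = d j • b j := by
    rw [← diagonalOperator_apply_basis, hcd, diagonalOperator_apply_basis]
  exact smul_left_injective ℂ (b.orthonormal.ne_zero j) hj

theorem norm_diagonalOperator (c : ι → ℂ) : ‖diagonalOperator b c‖ = ‖c‖ :=
  NonUnitalStarAlgHom.norm_map _ (diagonalOperator_injective b) c

theorem exp_diagonalOperator (c : ι → ℂ) :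
    exp (diagonalOperator b c) = diagonalOperator b fun j => Complex.exp (c j) := by
  let _ : NormedAlgebra ℚ (E →L[ℂ] E) := .restrictScalars ℚ ℂ _
  have hcont := (NonUnitalStarAlgHom.isometry _ (diagonalOperator_injective b)).continuous
  rw [← NormedSpace.map_exp _ hcont]
  congr 1
  ext j
  rw [Pi.coe_exp, Complex.exp_eq_exp_ℂ]

theorem det_diagonalOperator (c : ι → ℂ) :
    LinearMap.det (diagonalOperator b c : E →ₗ[ℂ] E) = ∏ j, c j := by
  classical
  have hmatrix : LinearMap.toMatrix b.toBasis b.toBasis (diagonalOperator b c : E →ₗ[ℂ] E) =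
      Matrix.diagonal c := by
    ext i j
    rcases eq_or_ne i j with rfl | hij <;>
      simp [LinearMap.toMatrix_apply, diagonalOperator_apply_basis, *]
  rw [← LinearMap.det_toMatrix b.toBasis, hmatrix, Matrix.det_diagonal]

theorem diagonalOperator_mul_I_mem_skewAdjoint (θ : ι → ℝ) :
    diagonalOperator b (fun j => θ j * I) ∈ skewAdjoint (E →L[ℂ] E) := by
  rw [skewAdjoint.mem_iff, ← map_star, ← map_neg]
  congr 1
  ext j
  simp

theorem exp_smul_diagonalOperator_mul_I (θ : ι → ℝ) (t : ℝ) :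
    exp (t • diagonalOperator b fun j => θ j * I) =
      diagonalOperator b fun j => (Circle.exp (t * θ j) : ℂ) := by
  have hsmul : t • diagonalOperator b (fun j => θ j * I) =
      diagonalOperator b fun j => ((t * θ j : ℝ) : ℂ) * I := by
    rw [← Complex.coe_smul, ← map_smul]
    congr 1
    ext j
    simp [mul_assoc]
  rw [hsmul, exp_diagonalOperator]
  rfl

end Diagonal

/-! ### Unitary operators -/

section Unitary

theorem exists_isSelfAdjoint_exp_eq {A : Type*} [CStarAlgebra A] {u : A} (hu : u ∈ unitary A)
    (hfin : (spectrum ℂ u).Finite) : ∃ a : A, IsSelfAdjoint a ∧ exp (I • a) = u := by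
  have : IsStarNormal u := isStarNormal_of_mem_unitary hu
  have hcont : ContinuousOn (fun z : ℂ => (z.arg : ℂ)) (spectrum ℂ u) := hfin.continuousOn _
  refine ⟨cfc (fun z : ℂ => (z.arg : ℂ)) u, .cfc_arg u, ?_⟩
  rw [← CFC.exp_eq_normedSpace_exp (𝕜 := ℂ), ← cfc_comp_smul .., ← cfc_comp' ..]
  conv_rhs => rw [← cfc_id' ℂ u]
  refine cfc_congr fun z hz => ?_
  have hnorm : ‖z‖ = 1 := spectrum.norm_eq_one_of_unitary hu hz
  simpa [hnorm, mul_comm, ← Complex.exp_eq_exp_ℂ] using Complex.norm_mul_exp_arg_mul_I z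

theorem finite_spectrum_clm {E : Type*} [NormedAddCommGroup E] [NormedSpace ℂ E]
    [FiniteDimensional ℂ E] (A : E →L[ℂ] E) : (spectrum ℂ A).Finite := by
  rw [← AlgEquiv.spectrum_eq (Module.End.toContinuousLinearMap E).symm A]
  exact Module.End.finite_spectrum _

variable {E : Type*} [NormedAddCommGroup E] [InnerProductSpace ℂ E] [CompleteSpace E]
  [FiniteDimensional ℂ E]

theorem exists_eq_diagonalOperator_of_isSelfAdjoint {A : E →L[ℂ] E} (hA : IsSelfAdjoint A) :
    ∃ (b : OrthonormalBasis (Fin (finrank ℂ E)) ℂ E) (a : Fin (finrank ℂ E) → ℝ),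
      A = diagonalOperator b fun j => (a j : ℂ) :=
  have hsymm : (A : E →ₗ[ℂ] E).IsSymmetric := hA.isSymmetric
  ⟨hsymm.eigenvectorBasis rfl, hsymm.eigenvalues rfl,
    eq_diagonalOperator_of_apply_basis (hsymm.apply_eigenvectorBasis rfl)⟩

theorem exists_eq_diagonalOperator_of_mem_unitary {w : E →L[ℂ] E}
    (hw : w ∈ unitary (E →L[ℂ] E)) :
    ∃ (b : OrthonormalBasis (Fin (finrank ℂ E)) ℂ E) (z : Fin (finrank ℂ E) → Circle),
      w = diagonalOperator b fun j => (z j : ℂ) := by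
  -- Taking a logarithm reduces the claim to the spectral theorem for self-adjoint operators.
  obtain ⟨A, hA, rfl⟩ := exists_isSelfAdjoint_exp_eq hw (finite_spectrum_clm w)
  obtain ⟨b, a, rfl⟩ := exists_eq_diagonalOperator_of_isSelfAdjoint hA
  refine ⟨b, fun j => Circle.exp (a j), ?_⟩
  rw [← map_smul, exp_diagonalOperator]
  simp [mul_comm]

theorem norm_det_of_mem_unitary {w : E →L[ℂ] E} (hw : w ∈ unitary (E →L[ℂ] E)) :
    ‖LinearMap.det (w : E →ₗ[ℂ] E)‖ = 1 := by
  obtain ⟨b, z, rfl⟩ := exists_eq_diagonalOperator_of_mem_unitary hw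
  simp [det_diagonalOperator, Circle.norm_coe]

theorem norm_prod_coe_circle_sub_one_le {ι : Type*} (s : Finset ι) (z : ι → Circle) :
    ‖(∏ j ∈ s, (z j : ℂ)) - 1‖ ≤ ∑ j ∈ s, ‖(z j : ℂ) - 1‖ := by
  classical
  induction s using Finset.induction_on with
  | empty => simp
  | insert i s hi ih =>
    rw [Finset.prod_insert hi, Finset.sum_insert hi, add_comm]
    calc ‖(z i : ℂ) * ∏ j ∈ s, (z j : ℂ) - 1‖
        = ‖(z i : ℂ) * (∏ j ∈ s, (z j : ℂ) - 1) + (z i - 1)‖ := by ring_nf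
      _ ≤ ‖(∏ j ∈ s, (z j : ℂ)) - 1‖ + ‖(z i : ℂ) - 1‖ := by
        simpa [Circle.norm_coe] using norm_add_le ((z i : ℂ) * (∏ j ∈ s, (z j : ℂ) - 1)) (z i - 1)
      _ ≤ _ := by gcongr

theorem norm_det_sub_one_le {w : E →L[ℂ] E} (hw : w ∈ unitary (E →L[ℂ] E)) :
    ‖LinearMap.det (w : E →ₗ[ℂ] E) - 1‖ ≤ finrank ℂ E * ‖w - 1‖ := by
  obtain ⟨b, z, rfl⟩ := exists_eq_diagonalOperator_of_mem_unitary hw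
  rw [det_diagonalOperator, ← map_one (diagonalOperator b), ← map_sub, norm_diagonalOperator]
  calc ‖(∏ j, (z j : ℂ)) - 1‖ ≤ ∑ j, ‖(z j : ℂ) - 1‖ := norm_prod_coe_circle_sub_one_le _ z
    _ ≤ ∑ _j : Fin (finrank ℂ E), ‖(fun j => (z j : ℂ)) - 1‖ :=
      Finset.sum_le_sum fun j _ => norm_le_pi_norm ((fun j => (z j : ℂ)) - 1) j
    _ = finrank ℂ E * ‖(fun j => (z j : ℂ)) - 1‖ := by simp

theorem norm_det_sub_det_le {u v : E →L[ℂ] E} (hu : u ∈ unitary (E →L[ℂ] E))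
    (hv : v ∈ unitary (E →L[ℂ] E)) :
    ‖LinearMap.det (v : E →ₗ[ℂ] E) - LinearMap.det (u : E →ₗ[ℂ] E)‖ ≤
      finrank ℂ E * ‖v - u‖ := by
  have huw : u * (star u * v) = v := by
    rw [← mul_assoc, Unitary.mul_star_self_of_mem hu, one_mul]
  have hw : star u * v ∈ unitary (E →L[ℂ] E) := mul_mem (Unitary.star_mem hu) hv
  generalize star u * v = w at huw hw
  subst huw
  rw [ContinuousLinearMap.toLinearMap_mul, map_mul, ← mul_sub_one, ← mul_sub_one, norm_mul,
    norm_det_of_mem_unitary hu, one_mul, CStarRing.norm_mem_unitary_mul _ hu]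
  exact norm_det_sub_one_le hw

end Unitary

/-! ### Angles with prescribed sum -/

section Angles

theorem circleExp_sum {ι : Type*} (s : Finset ι) (θ : ι → ℝ) :
    Circle.exp (∑ j ∈ s, θ j) = ∏ j ∈ s, Circle.exp (θ j) :=
  map_sum Circle.expHom θ s

theorem coe_circle_prod {ι : Type*} (s : Finset ι) (z : ι → Circle) :
    ((∏ j ∈ s, z j : Circle) : ℂ) = ∏ j ∈ s, (z j : ℂ) :=
  map_prod Circle.coeHom z s

theorem exists_circleExp_eq_mem_Ico (z : Circle) (m : ℝ) :
    ∃ θ ∈ Ico m (m + 2 * Real.pi), Circle.exp θ = z := by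
  obtain ⟨θ, hθ, hexp⟩ := Circle.periodic_exp.exists_mem_Ico Real.two_pi_pos (arg z) m
  exact ⟨θ, hθ, hexp.symm.trans (Circle.exp_arg z)⟩

variable {ι : Type*} [Fintype ι] {c : ℝ}

theorem exists_nat_sum_eq_add_mul_two_pi {m : ℝ} {θ : ι → ℝ} (hm : Fintype.card ι * m = c)
    (hθ : ∀ j, θ j ∈ Ico m (m + 2 * Real.pi)) (hprod : ∏ j, Circle.exp (θ j) = Circle.exp c) :
    ∃ k : ℕ, k ≤ Fintype.card ι ∧ ∑ j, θ j = c + k * (2 * Real.pi) := by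
  obtain ⟨k, hk⟩ := Circle.exp_eq_exp.1 ((circleExp_sum _ θ).trans hprod)
  have hlower : c ≤ ∑ j, θ j := by
    simpa [hm] using Finset.card_nsmul_le_sum Finset.univ θ m fun j _ => (hθ j).1
  have hupper : ∑ j, θ j ≤ c + Fintype.card ι * (2 * Real.pi) := by
    simpa [mul_add, hm] using Finset.sum_le_card_nsmul Finset.univ θ _ fun j _ => (hθ j).2.le
  have hk_nonneg : 0 ≤ k := by
    have : (0 : ℝ) ≤ k := nonneg_of_mul_nonneg_left (by linarith) Real.two_pi_pos
    exact_mod_cast this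
  lift k to ℕ using hk_nonneg
  refine ⟨k, ?_, hk⟩
  have : (k : ℝ) ≤ Fintype.card ι := by
    refine le_of_mul_le_mul_right ?_ Real.two_pi_pos
    push_cast at hk
    linarith
  exact_mod_cast this

theorem exists_circleExp_eq_sum_eq [Nonempty ι] {z : ι → Circle} (hz : ∏ j, z j = Circle.exp c) :
    ∃ θ : ι → ℝ, (∀ j, Circle.exp (θ j) = z j) ∧ ∑ j, θ j = c ∧
      ∀ j, |θ j - c / Fintype.card ι| ≤ 2 * Real.pi := by
  classical
  set m := c / Fintype.card ι
  have hm : Fintype.card ι * m = c := mul_div_cancel₀ c (by simp)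
  choose θ hθ hexp using fun j => exists_circleExp_eq_mem_Ico (z j) m
  obtain ⟨k, hk, hsum⟩ := exists_nat_sum_eq_add_mul_two_pi hm hθ (by simpa only [hexp])
  obtain ⟨s, -, hs⟩ := Finset.exists_subset_card_eq (s := Finset.univ (α := ι)) hk
  refine ⟨fun j => if j ∈ s then θ j - 2 * Real.pi else θ j, fun j => ?_, ?_, fun j => ?_⟩
  · by_cases hj : j ∈ s <;> simp only [hj, if_true, if_false, Circle.exp_sub_two_pi, hexp]
  · calc ∑ j, (if j ∈ s then θ j - 2 * Real.pi else θ j)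
        = ∑ j, θ j - ∑ j, (if j ∈ s then 2 * Real.pi else 0) := by
          rw [← Finset.sum_sub_distrib]
          exact Finset.sum_congr rfl fun j _ => by split_ifs <;> simp
      _ = c := by simp [hsum, hs]
  · obtain ⟨hlower, hupper⟩ := hθ j
    rw [abs_le]
    by_cases hj : j ∈ s <;> simp only [hj, if_true, if_false] <;> constructor <;>
      linarith [Real.pi_pos]

end Angles

/-! ### Curves `t ↦ u exp(tX)` -/

section OneParameter

theorem contDiff_mul_exp_smul {A : Type*} [NormedRing A] [NormedAlgebra ℝ A] [CompleteSpace A]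
    (u X : A) : ContDiff ℝ 1 fun t : ℝ => u * exp (t • X) := by
  have hexp : ContDiff ℝ 1 (exp : A → A) :=
    contDiff_iff_contDiffAt.2 fun Y => (NormedSpace.exp_analytic (𝕂 := ℝ) Y).contDiffAt
  fun_prop

variable {A : Type*} [CStarAlgebra A] {u X : A}

theorem mul_exp_smul_mem_unitary (hu : u ∈ unitary A) (hX : X ∈ skewAdjoint A) (t : ℝ) :
    u * exp (t • X) ∈ unitary A :=
  let _ : NormedAlgebra ℚ A := .restrictScalars ℚ ℂ A
  mul_mem hu (NormedSpace.exp_mem_unitary_of_mem_skewAdjoint (skewAdjoint.smul_mem t hX))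

theorem pathLength_mul_exp_smul (hu : u ∈ unitary A) (hX : X ∈ skewAdjoint A) (a b : ℝ) :
    pathLength (fun t : ℝ => u * exp (t • X)) a b = (b - a) * ‖X‖ := by
  have hspeed (t : ℝ) : ‖deriv (fun s : ℝ => u * exp (s • X)) t‖ = ‖X‖ := by
    rw [((hasDerivAt_exp_smul_const X t).const_mul u).deriv, ← mul_assoc,
      CStarRing.norm_mem_unitary_mul _ (mul_exp_smul_mem_unitary hu hX t)]
  simp [pathLength, hspeed]

end OneParameter

theorem exists_skewAdjoint_exp_eq {E : Type*} [NormedAddCommGroup E] [InnerProductSpace ℂ E]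
    [CompleteSpace E] [FiniteDimensional ℂ E] [Nontrivial E] {w : E →L[ℂ] E} {δ : ℝ}
    (hw : w ∈ unitary (E →L[ℂ] E)) (hdet : LinearMap.det (w : E →ₗ[ℂ] E) = Circle.exp δ) :
    ∃ X ∈ skewAdjoint (E →L[ℂ] E), exp X = w ∧
      (∀ t : ℝ, LinearMap.det (exp (t • X) : E →L[ℂ] E).toLinearMap = Circle.exp (t * δ)) ∧
      ‖X‖ ≤ |δ| / finrank ℂ E + 2 * Real.pi := by
  have : NeZero (finrank ℂ E) := ⟨finrank_pos.ne'⟩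
  obtain ⟨b, z, rfl⟩ := exists_eq_diagonalOperator_of_mem_unitary hw
  have hprod : ∏ j, z j = Circle.exp δ := by
    rw [det_diagonalOperator, ← coe_circle_prod] at hdet
    exact Circle.ext hdet
  obtain ⟨θ, hexp, hsum, hbound⟩ := exists_circleExp_eq_sum_eq hprod
  rw [Fintype.card_fin] at hbound
  refine ⟨_, diagonalOperator_mul_I_mem_skewAdjoint b θ, ?_, fun t => ?_, ?_⟩
  · simpa [hexp] using exp_smul_diagonalOperator_mul_I b θ 1
  · rw [exp_smul_diagonalOperator_mul_I, det_diagonalOperator, ← hsum, Finset.mul_sum,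
      circleExp_sum, coe_circle_prod]
  · rw [norm_diagonalOperator, pi_norm_le_iff_of_nonneg (by positivity)]
    intro j
    calc ‖(θ j : ℂ) * I‖ = |δ / finrank ℂ E + (θ j - δ / finrank ℂ E)| := by simp
      _ ≤ |δ / finrank ℂ E| + |θ j - δ / finrank ℂ E| := abs_add_le ..
      _ ≤ |δ| / finrank ℂ E + 2 * Real.pi := by
        rw [abs_div, Nat.abs_cast]
        gcongr
        exact hbound j

/-! ### Curves in the universal cover -/

section UniversalCover

variable {N : ℕ} {u v : Op N} {φ ψ : ℝ}

/-- The set of lengths of piecewise C¹ curves in `Ũ(H)` from `(u, φ)` to `(v, ψ)`, whose infimum is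
`ucoverDist N u φ v ψ`. As there, only the first component of a curve contributes to its length. -/
def ucoverLengths (N : ℕ) (u : Op N) (φ : ℝ) (v : Op N) (ψ : ℝ) : Set ℝ :=
  {l | ∃ (a b : ℝ) (γ : ℝ → Op N) (f : ℝ → ℝ), a ≤ b ∧
    PiecewiseC1On (fun t => (γ t, f t)) a b ∧
    (∀ t ∈ Icc a b, InUCover N (γ t) (f t)) ∧
    γ a = u ∧ f a = φ ∧ γ b = v ∧ f b = ψ ∧
    l = pathLength γ a b}

variable {γ : ℝ → Op N} {f : ℝ → ℝ} {a b : ℝ}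

theorem abs_deriv_le_mul_norm_deriv_of_inUCover {x : ℝ} (hγ : DifferentiableAt ℝ γ x)
    (hf : DifferentiableAt ℝ f x) (hcover : ∀ᶠ t in 𝓝 x, InUCover N (γ t) (f t)) :
    |deriv f x| ≤ N * ‖deriv γ x‖ := by
  have hderiv : HasDerivAt (fun t => Complex.exp (f t * I))
      (Complex.exp (f x * I) * (deriv f x * I)) x :=
    (hf.hasDerivAt.ofReal_comp.mul_const I).cexp
  have hnorm : ‖deriv (fun t => Complex.exp (f t * I)) x‖ = |deriv f x| := by
    rw [hderiv.deriv, norm_mul, norm_exp_ofReal_mul_I]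
    simp
  rw [← hnorm]
  refine norm_deriv_le_of_norm_sub_le hderiv.differentiableAt hγ ?_
  filter_upwards [hcover] with y hy
  have hx := hcover.self_of_nhds
  simpa [hx.2, hy.2] using norm_det_sub_det_le hx.1 hy.1

theorem abs_sub_le_mul_pathLength_of_inUCover (hab : a ≤ b)
    (hsmooth : PiecewiseC1On (fun t => (γ t, f t)) a b)
    (hcover : ∀ t ∈ Icc a b, InUCover N (γ t) (f t)) : |f b - f a| ≤ N * pathLength γ a b := by
  have hγ : PiecewiseC1On γ a b := hsmooth.comp_clm (.fst ℝ (Op N) ℝ)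
  have hf : PiecewiseC1On f a b := hsmooth.comp_clm (.snd ℝ (Op N) ℝ)
  calc |f b - f a| ≤ pathLength f a b := hf.norm_sub_le_pathLength
    _ ≤ N * pathLength γ a b := hγ.pathLength_le_mul hf hab fun x hx hγx hfx =>
      abs_deriv_le_mul_norm_deriv_of_inUCover hγx hfx <|
        Filter.eventually_of_mem (Icc_mem_nhds hx.1 hx.2) hcover

theorem abs_sub_div_mem_lowerBounds_ucoverLengths (N : ℕ) (u v : Op N) (φ ψ : ℝ) :
    |ψ - φ| / N ∈ lowerBounds (ucoverLengths N u φ v ψ) := by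
  rintro _ ⟨a, b, γ, f, hab, hsmooth, hcover, -, rfl, -, rfl, rfl⟩
  refine div_le_of_le_mul₀ N.cast_nonneg (pathLength_nonneg γ hab) ?_
  rw [mul_comm]
  exact abs_sub_le_mul_pathLength_of_inUCover hab hsmooth hcover

theorem exists_mem_ucoverLengths_le [NeZero N] (hu : InUCover N u φ) (hv : InUCover N v ψ) :
    ∃ l ∈ ucoverLengths N u φ v ψ, l ≤ |ψ - φ| / N + 2 * Real.pi := by
  obtain ⟨w, hw, rfl⟩ : ∃ w ∈ unitary (Op N), u * w = v :=
    ⟨star u * v, mul_mem (Unitary.star_mem hu.1) hv.1, by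
      rw [← mul_assoc, Unitary.mul_star_self_of_mem hu.1, one_mul]⟩
  have hdet : LinearMap.det (w : Hsp N →ₗ[ℂ] Hsp N) = Circle.exp (ψ - φ) := by
    have := hv.2
    rw [ContinuousLinearMap.toLinearMap_mul, map_mul, hu.2] at this
    rw [Circle.coe_exp, ofReal_sub, sub_mul, Complex.exp_sub, ← this,
      mul_div_cancel_left₀ _ (Complex.exp_ne_zero _)]
  obtain ⟨X, hX, hexp, hdetX, hnorm⟩ := exists_skewAdjoint_exp_eq hw hdet
  rw [finrank_euclideanSpace_fin] at hnorm
  refine ⟨pathLength (fun t : ℝ => u * exp (t • X)) 0 1,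
    ⟨0, 1, _, fun t => φ + t * (ψ - φ), zero_le_one, ?_, fun t _ => ⟨?_, ?_⟩, by simp, by simp,
      by simp [hexp], by simp, rfl⟩, ?_⟩
  · exact .of_contDiff ((contDiff_mul_exp_smul u X).prodMk (by fun_prop)) zero_le_one
  · exact mul_exp_smul_mem_unitary hu.1 hX t
  · rw [ContinuousLinearMap.toLinearMap_mul, map_mul, hu.2, hdetX, Circle.coe_exp,
      ← Complex.exp_add]
    push_cast
    ring_nf
  · simpa [pathLength_mul_exp_smul hu.1 hX] using hnorm

end UniversalCover

/-- for `(u,φ), (v,ψ) ∈ Ũ(H)`,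
`|ψ − φ|/N ≤ d̃((u,φ),(v,ψ)) ≤ |ψ − φ|/N + 2π`. -/
theorem ucoverDist_bounds (N : ℕ) (hN : 1 ≤ N) (u v : Op N) (φ ψ : ℝ)
    (hu : InUCover N u φ) (hv : InUCover N v ψ) :
    |ψ - φ| / (N : ℝ) ≤ ucoverDist N u φ v ψ ∧
      ucoverDist N u φ v ψ ≤ |ψ - φ| / (N : ℝ) + 2 * Real.pi := by
  have : NeZero N := ⟨Nat.one_le_iff_ne_zero.1 hN⟩
  have hlower := abs_sub_div_mem_lowerBounds_ucoverLengths N u v φ ψ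
  obtain ⟨l, hl, hupper⟩ := exists_mem_ucoverLengths_le hu hv
  exact ⟨le_csInf ⟨l, hl⟩ hlower, (csInf_le ⟨_, hlower⟩ hl).trans hupper⟩
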